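/- Let g be a positive differentiable function on [γ, ∞) with γ ≥ 1, and suppose there is 0 < α < 1 with 0 < a(x; g) < α for all x ≥ γ. Then for every p ≥ 1, 1/g(γ) + ∫_0^p dt/g(t+γ) < (1/(1−α)) · (p+γ)/g(p+γ). -/

import Mathlib

/-!
Since `(x / g x)' = (1 - a(x; g)) / g x`, an upper bound `a(x; g) ≤ α` gives
`(1 - α) * ∫ 1 / g ≤ b / g b - a / g a` over `[a, b]`. For `a = γ > 1 - α`, the boundary term
`γ / g γ` strictly exceeds `(1 - α) / g γ`, which absorbs the extra summand `1 / g γ`.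
-/

open Set

/-- The elasticity (logarithmic derivative with respect to `log x`) of `g` at `x`, written
`a(x; g)` in the paper. It takes the value `0` where `g` vanishes or is not differentiable. -/
noncomputable def elasticity (g : ℝ → ℝ) (x : ℝ) : ℝ :=
  x * deriv g x / g x

section

variable {g : ℝ → ℝ} {α : ℝ}

theorem hasDerivAt_id_div {x : ℝ} (hdiff : DifferentiableAt ℝ g x)
    (hne : g x ≠ 0) : HasDerivAt (fun y ↦ y / g y) ((1 - elasticity g x) / g x) x := by
  refine ((hasDerivAt_id' x).fun_div hdiff.hasDerivAt hne).congr_deriv ?_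
  rw [elasticity]
  field_simp

theorem one_sub_mul_integral_one_div_le_of_elasticity_le {a b : ℝ} (hab : a ≤ b)
    (hcont : ContinuousOn g (Icc a b)) (hpos : ∀ x ∈ Icc a b, 0 < g x)
    (hdiff : DifferentiableOn ℝ g (Ioo a b)) (hle : ∀ x ∈ Ioo a b, elasticity g x ≤ α) :
    (1 - α) * ∫ x in a..b, 1 / g x ≤ b / g b - a / g a := by
  have hne : ∀ x ∈ Icc a b, g x ≠ 0 := fun x hx ↦ (hpos x hx).ne'
  have hderiv : ∀ x ∈ Ioo a b, HasDerivAt (fun y ↦ y / g y) ((1 - elasticity g x) / g x) x :=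
    fun x hx ↦ hasDerivAt_id_div (hdiff.differentiableAt (Ioo_mem_nhds hx.1 hx.2))
      (hne x (Ioo_subset_Icc_self hx))
  have hderiv_ge : ∀ x ∈ Ioo a b, (1 - α) * (1 / g x) ≤ (1 - elasticity g x) / g x := by
    intro x hx
    have := hpos x (Ioo_subset_Icc_self hx)
    rw [mul_one_div]
    gcongr
    exact hle x hx
  have hint : MeasureTheory.IntegrableOn (fun x ↦ (1 - α) * (1 / g x)) (Icc a b) :=
    (continuousOn_const.mul (continuousOn_const.div hcont hne)).integrableOn_Icc
  rw [← intervalIntegral.integral_const_mul]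
  exact intervalIntegral.integral_le_sub_of_hasDeriv_right_of_le hab
    (continuousOn_id.div hcont hne) (fun x hx ↦ (hderiv x hx).hasDerivWithinAt) hint hderiv_ge

theorem shifted_integral_bound_general {γ p : ℝ} (hα : α < 1) (hγ : 1 - α < γ) (hp : 0 ≤ p)
    (hcont : ContinuousOn g (Icc γ (p + γ))) (hpos : ∀ x ∈ Icc γ (p + γ), 0 < g x)
    (hdiff : DifferentiableOn ℝ g (Ioo γ (p + γ)))
    (hle : ∀ x ∈ Ioo γ (p + γ), elasticity g x ≤ α) :
    1 / g γ + (∫ t in (0 : ℝ)..p, 1 / g (t + γ)) < 1 / (1 - α) * ((p + γ) / g (p + γ)) := by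
  have hγp : γ ≤ p + γ := le_add_of_nonneg_left hp
  have hgγ : 0 < g γ := hpos γ (left_mem_Icc.2 hγp)
  have hstart : (1 - α) / g γ < γ / g γ := by gcongr
  have hshift : (∫ t in (0 : ℝ)..p, 1 / g (t + γ)) = ∫ x in γ..p + γ, 1 / g x := by
    rw [intervalIntegral.integral_comp_add_right (fun x ↦ 1 / g x), zero_add]
  rw [hshift, one_div_mul_eq_div, lt_div_iff₀' (sub_pos.2 hα)]
  calc
    (1 - α) * (1 / g γ + ∫ x in γ..p + γ, 1 / g x)
        = (1 - α) / g γ + (1 - α) * ∫ x in γ..p + γ, 1 / g x := by rw [mul_add, mul_one_div]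
    _ < γ / g γ + ((p + γ) / g (p + γ) - γ / g γ) := add_lt_add_of_lt_of_le hstart
        (one_sub_mul_integral_one_div_le_of_elasticity_le hγp hcont hpos hdiff hle)
    _ = (p + γ) / g (p + γ) := add_sub_cancel _ _

end

theorem shifted_integral_bound (g : ℝ → ℝ) (γ α : ℝ) (hγ : 1 ≤ γ)
    (hα0 : 0 < α) (hα1 : α < 1)
    (hgpos : ∀ x ≥ γ, 0 < g x)
    (hgdiff : ∀ x ≥ γ, DifferentiableAt ℝ g x)
    (ha : ∀ x ≥ γ, 0 < x * deriv g x / g x ∧ x * deriv g x / g x < α) :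
    ∀ p : ℝ, 1 ≤ p →
      1 / g γ + (∫ t in (0:ℝ)..p, 1 / g (t + γ)) < (1 / (1 - α)) * ((p + γ) / g (p + γ)) :=
  fun _p hp ↦ shifted_integral_bound_general hα1 (by linarith) (zero_le_one.trans hp)
    (fun x hx ↦ (hgdiff x hx.1).continuousAt.continuousWithinAt) (fun x hx ↦ hgpos x hx.1)
    (fun x hx ↦ (hgdiff x hx.1.le).differentiableWithinAt) (fun x hx ↦ (ha x hx.1.le).2.le)
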